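/- Let ν̄ = (ν¹,…,ν^N) be an N-dimensional parametric b-measure on ℝ^N with common m-bounds {m_j}_{j≥1} and common Lipschitz l-bounds {l_j}_{j≥1}, and let (t₀, y₀) ∈ ℝ × ℝ^N. Then there exists a maximal open interval I = (α, β) containing t₀ and a continuous function y : I → ℝ^N which is the unique solution of the integral equation y_i(t) = y_{0,i} + ∫_{t₀}^t dν^i_{y(s)} (i = 1,…,N) on I, in the sense that any continuous solution on an interval containing t₀ is a restriction of y. Moreover, if β < ∞ then |y(t)| → ∞ as t → β⁻, and if α > −∞ then |y(t)| → ∞ as t → α⁺. -/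

import Mathlib

open MeasureTheory Set Filter Topology

/-- A (continuous real) b-measure: a set function on the bounded Borel subsets of `ℝ`
which vanishes on `∅`, is countably additive over countable pairwise disjoint families
of bounded Borel sets with bounded union, and vanishes on singletons. -/
structure IsBMeasure (μ : Set ℝ → ℝ) : Prop where
  empty : μ ∅ = 0
  countably_additive : ∀ A : ℕ → Set ℝ, (∀ n, MeasurableSet (A n)) →
    (∀ n, Bornology.IsBounded (A n)) → Pairwise (Function.onFun Disjoint A) →
    Bornology.IsBounded (⋃ n, A n) →
    HasSum (fun n => μ (A n)) (μ (⋃ n, A n))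
  singleton : ∀ t : ℝ, μ {t} = 0

/-- A locally finite atomless Borel measure on `ℝ`. -/
def GoodMeasure (m : Measure ℝ) : Prop :=
  IsLocallyFiniteMeasure m ∧ ∀ t : ℝ, m {t} = 0

/-- `P` is a finite Borel partition of `A`. -/
def IsBorelPartition (A : Set ℝ) {n : ℕ} (P : Fin n → Set ℝ) : Prop :=
  (∀ i, MeasurableSet (P i)) ∧ Pairwise (Function.onFun Disjoint P) ∧ (⋃ i, P i) = A

/-- `|μ| ≤ m` : total-variation bound of the set function `μ` by the measure `m`,
expressed through finite Borel partitions of bounded Borel sets. -/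
def TVLE (μ : Set ℝ → ℝ) (m : Measure ℝ) : Prop :=
  ∀ A : Set ℝ, Bornology.IsBounded A → MeasurableSet A →
    ∀ (n : ℕ) (P : Fin n → Set ℝ), IsBorelPartition A P →
      ∑ i, |μ (P i)| ≤ (m A).toReal

/-- Partition-sum bound `Σ |μ₁(Aᵢ) - μ₂(Aᵢ)| ≤ c · l(A)` for the difference of two
set functions, over finite Borel partitions of bounded Borel sets. -/
def DiffLE (μ₁ μ₂ : Set ℝ → ℝ) (c : ℝ) (l : Measure ℝ) : Prop :=
  ∀ A : Set ℝ, Bornology.IsBounded A → MeasurableSet A →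
    ∀ (n : ℕ) (P : Fin n → Set ℝ), IsBorelPartition A P →
      ∑ i, |μ₁ (P i) - μ₂ (P i)| ≤ c * (l A).toReal

variable {E : Type*} [NormedAddCommGroup E]

/-- `m` is an m-bound of `ν` on the closed ball of radius `j`. -/
def HasMBound (ν : E → Set ℝ → ℝ) (j : ℕ) (m : Measure ℝ) : Prop :=
  GoodMeasure m ∧ ∀ y : E, ‖y‖ ≤ (j : ℝ) → TVLE (ν y) m

/-- `l` is an l-bound of `ν` on the closed ball of radius `j`, for the modulus `ω`. -/
def HasLBound (ω : ℝ → ℝ) (ν : E → Set ℝ → ℝ) (j : ℕ) (l : Measure ℝ) : Prop :=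
  GoodMeasure l ∧ ∀ y₁ y₂ : E, ‖y₁‖ ≤ (j : ℝ) → ‖y₂‖ ≤ (j : ℝ) →
    DiffLE (ν y₁) (ν y₂) (ω ‖y₁ - y₂‖) l

/-- A non-decreasing family of moduli of continuity `{ω_j}`. -/
structure IsModulusFamily (ω : ℕ → ℝ → ℝ) : Prop where
  continuousOn : ∀ j, ContinuousOn (ω j) (Ici 0)
  monotoneOn : ∀ j, MonotoneOn (ω j) (Ici 0)
  map_zero : ∀ j, ω j 0 = 0
  nonneg : ∀ j x, 0 ≤ x → 0 ≤ ω j x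
  mono_index : ∀ j x, 0 ≤ x → ω j x ≤ ω (j + 1) x

/-- A parametric b-measure on `E` with respect to the family of moduli `ω`. -/
def IsParamBMeasure (ω : ℕ → ℝ → ℝ) (ν : E → Set ℝ → ℝ) : Prop :=
  (∀ y, IsBMeasure (ν y)) ∧
    ∀ j : ℕ, 1 ≤ j → ∃ m l : Measure ℝ, HasMBound ν j m ∧ HasLBound (ω j) ν j l

/-- A tagged partition of `[a,b]`. -/
structure TaggedPartition (a b : ℝ) where
  k : ℕ
  k_pos : 0 < k
  t : ℕ → ℝ
  tag : ℕ → ℝ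
  left : t 0 = a
  right : t k = b
  lt : ∀ i < k, t i < t (i + 1)
  tag_mem : ∀ i < k, tag i ∈ Set.Icc (t i) (t (i + 1))

/-- The mesh of the tagged partition is `< δ`. -/
def TaggedPartition.MeshLT {a b : ℝ} (P : TaggedPartition a b) (δ : ℝ) : Prop :=
  ∀ i < P.k, P.t (i + 1) - P.t i < δ

/-- The Riemann sum of the parametric b-measure `ν` along the curve `y` over the
tagged partition `P`. -/
def RiemannSum (ν : E → Set ℝ → ℝ) (y : ℝ → E) {a b : ℝ} (P : TaggedPartition a b) : ℝ :=
  ∑ i ∈ Finset.range P.k, ν (y (P.tag i)) (Set.Icc (P.t i) (P.t (i + 1)))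

/-- `L = ∫_a^b dν_{y(s)}` : `L` is the limit of the Riemann sums of `ν` along `y`
over tagged partitions of `[a,b]` as the mesh tends to `0`. -/
def IsCurveIntegral (ν : E → Set ℝ → ℝ) (y : ℝ → E) (a b : ℝ) (L : ℝ) : Prop :=
  ∀ ε > 0, ∃ δ > 0, ∀ P : TaggedPartition a b, P.MeshLT δ → |L - RiemannSum ν y P| < ε

/-- A suitable set of moduli of continuity `Θ = {θ_j^{[q₁,q₂]}}`. -/
structure IsSuitableModuli (Θ : ℕ → ℚ → ℚ → ℝ → ℝ) : Prop where
  continuousOn : ∀ (j : ℕ) (q₁ q₂ : ℚ), q₁ < q₂ → ContinuousOn (Θ j q₁ q₂) (Ici 0)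
  monotoneOn : ∀ (j : ℕ) (q₁ q₂ : ℚ), q₁ < q₂ → MonotoneOn (Θ j q₁ q₂) (Ici 0)
  map_zero : ∀ (j : ℕ) (q₁ q₂ : ℚ), q₁ < q₂ → Θ j q₁ q₂ 0 = 0
  nonneg : ∀ (j : ℕ) (q₁ q₂ : ℚ) (x : ℝ), q₁ < q₂ → 0 ≤ x → 0 ≤ Θ j q₁ q₂ x
  mono : ∀ (j₁ j₂ : ℕ) (q₁ q₂ p₁ p₂ : ℚ), j₁ ≤ j₂ → q₁ ≤ p₁ → p₁ < p₂ → p₂ ≤ q₂ →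
    ∀ x : ℝ, 0 ≤ x → Θ j₁ p₁ p₂ x ≤ Θ j₂ q₁ q₂ x

/-- The set `𝒦_j^I` of continuous functions `y : I → E`, `I = [q₁,q₂]`, bounded by `j`
and admitting `θ_j^I` as modulus of continuity. -/
def KSet (E : Type*) [NormedAddCommGroup E] (Θ : ℕ → ℚ → ℚ → ℝ → ℝ)
    (j : ℕ) (q₁ q₂ : ℚ) : Set (ℝ → E) :=
  {y | ContinuousOn y (Set.Icc (q₁ : ℝ) (q₂ : ℝ)) ∧
    (∀ t ∈ Set.Icc (q₁ : ℝ) (q₂ : ℝ), ‖y t‖ ≤ (j : ℝ)) ∧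
    ∀ t₁ ∈ Set.Icc (q₁ : ℝ) (q₂ : ℝ), ∀ t₂ ∈ Set.Icc (q₁ : ℝ) (q₂ : ℝ),
      ‖y t₁ - y t₂‖ ≤ Θ j q₁ q₂ |t₁ - t₂|}

/-- Convergence `ν_n → ν₀` in the topology `σ_Θ` : the integrals along curves of
`𝒦_j^I` converge uniformly, for every `j` and every compact interval `I` with
rational endpoints. -/
def SigmaThetaTendsto {E : Type*} [NormedAddCommGroup E] (Θ : ℕ → ℚ → ℚ → ℝ → ℝ)
    (ν : ℕ → E → Set ℝ → ℝ) (ν₀ : E → Set ℝ → ℝ) : Prop :=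
  ∀ (j : ℕ) (q₁ q₂ : ℚ), q₁ < q₂ → ∀ ε > 0, ∃ n₀ : ℕ, ∀ n ≥ n₀,
    ∀ y ∈ KSet E Θ j q₁ q₂, ∀ L L₀ : ℝ,
      IsCurveIntegral (ν n) y (q₁ : ℝ) (q₂ : ℝ) L →
      IsCurveIntegral ν₀ y (q₁ : ℝ) (q₂ : ℝ) L₀ → |L - L₀| < ε

/-- The time-translate `ν·t` of a parametric b-measure: `(ν·t)_y(A) = ν_y(A + t)`. -/
def BTranslate (ν : E → Set ℝ → ℝ) (t : ℝ) : E → Set ℝ → ℝ :=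
  fun y A => ν y ((fun s => s + t) '' A)

/-- The time-translate `m·t` of a Borel measure: `(m·t)(A) = m(A + t)`. -/
noncomputable def MTranslate (m : Measure ℝ) (t : ℝ) : Measure ℝ :=
  Measure.map (fun s => s - t) m

/-- An N-dimensional parametric b-measure on `E` with common m-bounds `m j` and
common Lipschitz l-bounds `l j`. -/
def IsNDimParamBMeasure {M : ℕ} (νbar : Fin M → E → Set ℝ → ℝ)
    (m l : ℕ → Measure ℝ) : Prop :=
  (∀ i y, IsBMeasure (νbar i y)) ∧
    ∀ j : ℕ, 1 ≤ j → GoodMeasure (m j) ∧ GoodMeasure (l j) ∧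
      (∀ i, ∀ y : E, ‖y‖ ≤ (j : ℝ) → TVLE (νbar i y) (m j)) ∧
      (∀ i, ∀ y₁ y₂ : E, ‖y₁‖ ≤ (j : ℝ) → ‖y₂‖ ≤ (j : ℝ) →
        DiffLE (νbar i y₁) (νbar i y₂) ‖y₁ - y₂‖ (l j))

/-- The oriented curve integral: `∫_b^a := -∫_a^b`. -/
def IsSignedCurveIntegral (ν : E → Set ℝ → ℝ) (y : ℝ → E) (a b : ℝ) (L : ℝ) : Prop :=
  (a ≤ b ∧ IsCurveIntegral ν y a b L) ∨ (b < a ∧ IsCurveIntegral ν y b a (-L))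

/-- `y` is a solution on `S` of the Cauchy problem `y' = ν̄_y`, `y(t₀) = y₀`, for the
N-dimensional parametric b-measure `ν̄`: componentwise,
`y_i(t) = y_{0,i} + ∫_{t₀}^t dν^i_{y(s)}`. -/
def IsSolutionOn {M : ℕ} (νbar : Fin M → EuclideanSpace ℝ (Fin M) → Set ℝ → ℝ)
    (t₀ : ℝ) (y₀ : EuclideanSpace ℝ (Fin M)) (S : Set ℝ)
    (y : ℝ → EuclideanSpace ℝ (Fin M)) : Prop :=
  t₀ ∈ S ∧ y t₀ = y₀ ∧ ContinuousOn y S ∧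
    ∀ t ∈ S, ∀ i : Fin M, IsSignedCurveIntegral (νbar i) y t₀ t (y t i - y₀ i)

/-- `y` is the maximal (noncontinuable) solution, defined on the open interval `S`:
every solution on an interval containing `t₀` is a restriction of `y`. -/
def IsMaximalSolution {M : ℕ} (νbar : Fin M → EuclideanSpace ℝ (Fin M) → Set ℝ → ℝ)
    (t₀ : ℝ) (y₀ : EuclideanSpace ℝ (Fin M)) (S : Set ℝ)
    (y : ℝ → EuclideanSpace ℝ (Fin M)) : Prop :=
  IsSolutionOn νbar t₀ y₀ S y ∧ IsOpen S ∧ S.OrdConnected ∧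
    ∀ S' : Set ℝ, S'.OrdConnected → ∀ z, IsSolutionOn νbar t₀ y₀ S' z →
      S' ⊆ S ∧ Set.EqOn z y S'

/-!
Writing `F(v, ·)` for the primitives of the b-measures `νⁱ_v`, the Riemann sums of `ν̄` along `y`
become `∑ (F(y(τₖ), tₖ₊₁) - F(y(τₖ), tₖ))`, so the integral equation is Kurzweil's generalized
differential equation `dy = DF(y, t)`. On a ball, the sum of an m-bound and an l-bound has a
continuous distribution function, a multiple `h` of which controls the increments of `F` and their
Lipschitz constants. Two approximate solutions with errors `ε`, `ε'` that stay `ω`-close drift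
apart by at most `(ω + ε + ε')(h(b) - h(a))`. Where `h` varies by at most `1/2` this can be
absorbed: solutions there are unique, and Euler polygons converge uniformly to a solution.

The interval of existence thus obtained around a time `β` is the same for all initial times near
`β` and all initial values in a given ball. Hence the maximal interval is open, and a solution
cannot return to a fixed ball arbitrarily close to an excluded endpoint.
-/

section TaggedPartitions

namespace TaggedPartition

variable {a b c δ : ℝ}

lemma t_le_t (P : TaggedPartition a b) {p q : ℕ} (hpq : p ≤ q) (hq : q ≤ P.k) :
    P.t p ≤ P.t q := by
  induction q, hpq using Nat.le_induction with
  | base => exact le_rfl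
  | succ q _ ih => exact (ih (by omega)).trans (P.lt q (by omega)).le

lemma t_mem_Icc (P : TaggedPartition a b) {p : ℕ} (hp : p ≤ P.k) : P.t p ∈ Icc a b :=
  ⟨P.left.symm.trans_le (P.t_le_t p.zero_le hp), (P.t_le_t hp le_rfl).trans_eq P.right⟩

lemma tag_mem_Icc (P : TaggedPartition a b) {i : ℕ} (hi : i < P.k) : P.tag i ∈ Icc a b :=
  Icc_subset_Icc (P.t_mem_Icc hi.le).1 (P.t_mem_Icc hi).2 (P.tag_mem i hi)

lemma exists_meshLT (hab : a < b) (hδ : 0 < δ) : ∃ P : TaggedPartition a b, P.MeshLT δ := by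
  obtain ⟨n, hn⟩ := exists_nat_gt ((b - a) / δ)
  have hn₀ : (0 : ℝ) < n := (div_pos (sub_pos.2 hab) hδ).trans hn
  have hwidth : 0 < (b - a) / n := div_pos (sub_pos.2 hab) hn₀
  have hstep : ∀ i : ℕ, a + (i + 1 : ℕ) * ((b - a) / n) = a + i * ((b - a) / n) + (b - a) / n :=
    fun i => by push_cast; ring
  refine ⟨{ k := n, k_pos := by exact_mod_cast hn₀
            t := fun i => a + i * ((b - a) / n), tag := fun i => a + i * ((b - a) / n)
            left := by simp
            right := by field_simp; ring
            lt := fun i _ => by rw [hstep]; linarith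
            tag_mem := fun i _ => by rw [hstep]; exact ⟨le_rfl, by linarith⟩ }, fun i _ => ?_⟩
  simp only [hstep, add_sub_cancel_left]
  exact (div_lt_comm₀ hδ hn₀).1 hn

lemma sum_sub_eq {V : Type*} [AddCommGroup V] (P : TaggedPartition a b) (f : ℝ → V) :
    ∑ i ∈ Finset.range P.k, (f (P.t (i + 1)) - f (P.t i)) = f b - f a := by
  rw [Finset.sum_range_sub (fun i => f (P.t i)), P.left, P.right]

lemma norm_sub_sub_sum_le {V : Type*} [NormedAddCommGroup V] (P : TaggedPartition a b)
    {f : ℝ → V} {h : ℝ → ℝ} {r : ℕ → V}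
    (H : ∀ i < P.k, ‖f (P.t (i + 1)) - f (P.t i) - r i‖ ≤ h (P.t (i + 1)) - h (P.t i)) :
    ‖f b - f a - ∑ i ∈ Finset.range P.k, r i‖ ≤ h b - h a := by
  rw [← P.sum_sub_eq f, ← P.sum_sub_eq h, ← Finset.sum_sub_distrib]
  exact norm_sum_le_of_le _ fun i hi => H i (Finset.mem_range.1 hi)

/-- The concatenation of tagged partitions of two adjacent intervals. -/
def concat (P : TaggedPartition a b) (Q : TaggedPartition b c) : TaggedPartition a c where
  k := P.k + Q.k
  k_pos := Nat.add_pos_left P.k_pos _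
  t i := if i ≤ P.k then P.t i else Q.t (i - P.k)
  tag i := if i < P.k then P.tag i else Q.tag (i - P.k)
  left := by simp [P.left]
  right := by simp [Q.k_pos.ne', Q.right]
  lt i hi := by
    rcases lt_trichotomy i P.k with h | rfl | h
    · simpa [h.le, Nat.succ_le_iff.2 h] using P.lt i h
    · simpa [P.right, Q.left] using Q.lt 0 Q.k_pos
    · have e : i + 1 - P.k = i - P.k + 1 := by omega
      simpa [h.not_ge, (h.trans i.lt_succ_self).not_ge, e] using Q.lt (i - P.k) (by omega)
  tag_mem i hi := by
    rcases lt_trichotomy i P.k with h | rfl | h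
    · simpa [h, h.le, Nat.succ_le_iff.2 h] using P.tag_mem i h
    · simpa [P.right, Q.left] using Q.tag_mem 0 Q.k_pos
    · have e : i + 1 - P.k = i - P.k + 1 := by omega
      simpa [h.not_gt, h.not_ge, (h.trans i.lt_succ_self).not_ge, e] using
        Q.tag_mem (i - P.k) (by omega)

lemma concat_t_of_le (P : TaggedPartition a b) (Q : TaggedPartition b c) {i : ℕ} (h : i ≤ P.k) :
    (P.concat Q).t i = P.t i :=
  if_pos h

lemma concat_tag_of_lt (P : TaggedPartition a b) (Q : TaggedPartition b c) {i : ℕ}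
    (h : i < P.k) : (P.concat Q).tag i = P.tag i :=
  if_pos h

lemma concat_t_add (P : TaggedPartition a b) (Q : TaggedPartition b c) (i : ℕ) :
    (P.concat Q).t (P.k + i) = Q.t i := by
  rcases i.eq_zero_or_pos with rfl | hi
  · simp [concat, P.right, Q.left]
  · simp [concat, hi.ne']

lemma concat_tag_add (P : TaggedPartition a b) (Q : TaggedPartition b c) (i : ℕ) :
    (P.concat Q).tag (P.k + i) = Q.tag i := by
  simp [concat]

lemma MeshLT.concat {P : TaggedPartition a b} {Q : TaggedPartition b c} (hP : P.MeshLT δ)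
    (hQ : Q.MeshLT δ) : (P.concat Q).MeshLT δ := by
  intro i hi
  rcases lt_or_ge i P.k with h | h
  · rw [P.concat_t_of_le Q h, P.concat_t_of_le Q h.le]
    exact hP i h
  · obtain ⟨j, rfl⟩ := Nat.exists_eq_add_of_le h
    rw [add_assoc, P.concat_t_add Q, P.concat_t_add Q]
    exact hQ j (Nat.lt_of_add_lt_add_left hi)

end TaggedPartition

lemma induction_on_short_steps {a b δ : ℝ} {p : ℝ → Prop} (hab : a ≤ b) (hδ : 0 < δ) (ha : p a)
    (step : ∀ c c', a ≤ c → c ≤ c' → c' ≤ b → c' - c < δ → p c → p c') : p b := by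
  rcases hab.eq_or_lt with rfl | hab
  · exact ha
  obtain ⟨P, hP⟩ := TaggedPartition.exists_meshLT hab hδ
  have hp : ∀ i ≤ P.k, p (P.t i) := by
    intro i
    induction i with
    | zero => exact fun _ => P.left.symm ▸ ha
    | succ i ih =>
      exact fun hi => step _ _ (P.t_mem_Icc (Nat.le_of_succ_le hi)).1 (P.lt i hi).le
        (P.t_mem_Icc hi).2 (hP i hi) (ih (Nat.le_of_succ_le hi))
  exact P.right ▸ hp P.k le_rfl

lemma le_mul_of_forall_pos_le_add_mul {x C k : ℝ} (H : ∀ η > 0, x ≤ (C + η) * k) :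
    x ≤ C * k := by
  have hlim : Tendsto (fun η => (C + η) * k) (𝓝[>] 0) (𝓝 ((C + 0) * k)) :=
    ContinuousAt.continuousWithinAt (by fun_prop)
  rw [add_zero] at hlim
  exact ge_of_tendsto hlim (eventually_nhdsWithin_of_forall H)

lemma norm_sub_le_mul_of_short_steps {V : Type*} [NormedAddCommGroup V] {f : ℝ → V} {h : ℝ → ℝ}
    {a b C : ℝ} (hab : a ≤ b)
    (H : ∀ η > 0, ∃ δ > 0, ∀ c c', a ≤ c → c ≤ c' → c' ≤ b → c' - c < δ →
      ‖f c' - f c‖ ≤ (C + η) * (h c' - h c)) :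
    ‖f b - f a‖ ≤ C * (h b - h a) := by
  refine le_mul_of_forall_pos_le_add_mul fun η hη => ?_
  obtain ⟨δ, hδ, hstep⟩ := H η hη
  refine induction_on_short_steps (p := fun c => ‖f c - f a‖ ≤ (C + η) * (h c - h a)) hab hδ
    (by simp) fun c c' hac hcc' hcb hlt ih => ?_
  calc ‖f c' - f a‖ ≤ ‖f c' - f c‖ + ‖f c - f a‖ := norm_sub_le_norm_sub_add_norm_sub ..
    _ ≤ (C + η) * (h c' - h c) + (C + η) * (h c - h a) :=
      add_le_add (hstep c c' hac hcc' hcb hlt) ih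
    _ = (C + η) * (h c' - h a) := by ring

/-- The filter on the tagged partitions of `[a, b]` along which the mesh tends to `0`. It is `⊥`
when `b ≤ a`, as there are no tagged partitions then. -/
def meshFilter (a b : ℝ) : Filter (TaggedPartition a b) :=
  ⨅ δ > 0, 𝓟 {P | P.MeshLT δ}

lemma meshFilter_hasBasis (a b : ℝ) :
    (meshFilter a b).HasBasis (fun δ : ℝ => 0 < δ) fun δ => {P | P.MeshLT δ} :=
  hasBasis_biInf_principal' (fun δ hδ δ' hδ' => ⟨min δ δ', lt_min hδ hδ',
    fun _ hP i hi => (hP i hi).trans_le (min_le_left _ _),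
    fun _ hP i hi => (hP i hi).trans_le (min_le_right _ _)⟩) ⟨1, one_pos⟩

lemma meshFilter_neBot {a b : ℝ} (hab : a < b) : (meshFilter a b).NeBot :=
  (meshFilter_hasBasis a b).neBot_iff.2 fun hδ => TaggedPartition.exists_meshLT hab hδ

lemma meshFilter_eq_bot {a b : ℝ} (hba : b ≤ a) : meshFilter a b = ⊥ :=
  have : IsEmpty (TaggedPartition a b) := ⟨fun P => hba.not_gt <|
    P.left.symm.trans_lt ((P.lt 0 P.k_pos).trans_le (P.t_mem_Icc P.k_pos).2)⟩
  filter_eq_bot_of_isEmpty _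

lemma tendsto_concat_meshFilter (a b c : ℝ) :
    Tendsto (fun PQ : TaggedPartition a b × TaggedPartition b c => PQ.1.concat PQ.2)
      (meshFilter a b ×ˢ meshFilter b c) (meshFilter a c) :=
  (meshFilter_hasBasis a c).tendsto_right_iff.2 fun _ hδ => mem_of_superset
    (prod_mem_prod ((meshFilter_hasBasis a b).mem_of_mem hδ)
      ((meshFilter_hasBasis b c).mem_of_mem hδ)) fun _ h => h.1.concat h.2

end TaggedPartitions

section KurzweilIntegral

variable {X V : Type*} [NormedAddCommGroup V]

/-- The Riemann-type sum `∑ i, (F(y(τᵢ), tᵢ₊₁) - F(y(τᵢ), tᵢ))` of the field `F` along the curve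
`y` over the tagged partition `P`. -/
def kurzweilSum (F : X → ℝ → V) (y : ℝ → X) {a b : ℝ} (P : TaggedPartition a b) : V :=
  ∑ i ∈ Finset.range P.k, (F (y (P.tag i)) (P.t (i + 1)) - F (y (P.tag i)) (P.t i))

/-- `L` is the Kurzweil integral `∫_a^b DF(y(τ), t)`, restricted to limits along the mesh. For
`b ≤ a` every `L` qualifies, as there is no tagged partition of `[a, b]`. -/
def HasKurzweilIntegral (F : X → ℝ → V) (y : ℝ → X) (a b : ℝ) (L : V) : Prop :=
  Tendsto (kurzweilSum F y) (meshFilter a b) (𝓝 L)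

lemma kurzweilSum_concat (F : X → ℝ → V) (y : ℝ → X) {a b c : ℝ} (P : TaggedPartition a b)
    (Q : TaggedPartition b c) :
    kurzweilSum F y (P.concat Q) = kurzweilSum F y P + kurzweilSum F y Q := by
  have hk : (P.concat Q).k = P.k + Q.k := rfl
  simp only [kurzweilSum, hk, Finset.sum_range_add, add_assoc, P.concat_t_add Q,
    P.concat_tag_add Q, add_left_inj]
  refine Finset.sum_congr rfl fun i hi => ?_
  have hi := Finset.mem_range.1 hi
  rw [P.concat_tag_of_lt Q hi, P.concat_t_of_le Q hi, P.concat_t_of_le Q hi.le]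

namespace HasKurzweilIntegral

variable {F : X → ℝ → V} {y z : ℝ → X} {a b c : ℝ} {L L' : V}

lemma of_le (hba : b ≤ a) : HasKurzweilIntegral F y a b L := by
  rw [HasKurzweilIntegral, meshFilter_eq_bot hba]
  exact tendsto_bot

lemma congr (hyz : EqOn y z (Icc a b)) (hL : HasKurzweilIntegral F y a b L) :
    HasKurzweilIntegral F z a b L := by
  have : kurzweilSum F y (a := a) (b := b) = kurzweilSum F z := funext fun P =>
    Finset.sum_congr rfl fun i hi => by rw [hyz (P.tag_mem_Icc (Finset.mem_range.1 hi))]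
  rwa [HasKurzweilIntegral, ← this]

lemma sub_left (hab : a < b) (hL : HasKurzweilIntegral F y a b L)
    (hL' : HasKurzweilIntegral F y a c L') : HasKurzweilIntegral F y b c (L' - L) := by
  have := meshFilter_neBot hab
  have h := (hL'.comp (tendsto_concat_meshFilter a b c)).sub (hL.comp tendsto_fst)
  rw [HasKurzweilIntegral, ← map_snd_prod (meshFilter a b) (meshFilter b c), tendsto_map'_iff]
  exact h.congr fun PQ => by simp [kurzweilSum_concat]

lemma sub_right (hbc : b < c) (hL : HasKurzweilIntegral F y b c L)
    (hL' : HasKurzweilIntegral F y a c L') : HasKurzweilIntegral F y a b (L' - L) := by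
  have := meshFilter_neBot hbc
  have h := (hL'.comp (tendsto_concat_meshFilter a b c)).sub (hL.comp tendsto_snd)
  rw [HasKurzweilIntegral, ← map_fst_prod (meshFilter a b) (meshFilter b c), tendsto_map'_iff]
  exact h.congr fun PQ => by simp [kurzweilSum_concat]

end HasKurzweilIntegral

end KurzweilIntegral

section ApproximateSolutions

variable {V : Type*} [NormedAddCommGroup V]

/-- The Kurzweil class `𝓕(K × ℝ, h)`: on `K` the increments in time of the field `F` are bounded
by those of the control function `h`, and so are their Lipschitz constants in space. -/
structure IsKurzweilClass (F : V → ℝ → V) (K : Set V) (h : ℝ → ℝ) : Prop where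
  monotone : Monotone h
  continuous : Continuous h
  norm_sub_le : ∀ v ∈ K, ∀ s t, s ≤ t → ‖F v t - F v s‖ ≤ h t - h s
  norm_sub_sub_sub_le : ∀ v ∈ K, ∀ w ∈ K, ∀ s t, s ≤ t →
    ‖(F v t - F v s) - (F w t - F w s)‖ ≤ ‖v - w‖ * (h t - h s)

/-- `y : S → K` follows the field `F` up to the error `ε`: on every interval `[s, t] ⊆ S` on which
it stays `ω`-close to a point `v ∈ K`, its increment is `(ω + ε)(h(t) - h(s))`-close to that of
`F(v, ·)`. For `ε = 0` these are the solutions of `dy = DF(y, t)`. -/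
structure IsApproxSolution (F : V → ℝ → V) (K : Set V) (h : ℝ → ℝ) (ε : ℝ) (y : ℝ → V)
    (S : Set ℝ) : Prop where
  mapsTo : MapsTo y S K
  continuousOn : ContinuousOn y S
  norm_sub_sub_le : ∀ s t, s ≤ t → Icc s t ⊆ S → ∀ v ∈ K, ∀ ω, (∀ r ∈ Icc s t, ‖y r - v‖ ≤ ω) →
    ‖y t - y s - (F v t - F v s)‖ ≤ (ω + ε) * (h t - h s)

variable {F : V → ℝ → V} {K : Set V} {h : ℝ → ℝ} {ε ε' ω a b c : ℝ} {x x₀ : V} {y z : ℝ → V}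
  {S S' : Set ℝ}

namespace IsKurzweilClass

lemma mono {K' : Set V} (hF : IsKurzweilClass F K h) (hK : K' ⊆ K) : IsKurzweilClass F K' h where
  monotone := hF.monotone
  continuous := hF.continuous
  norm_sub_le v hv := hF.norm_sub_le v (hK hv)
  norm_sub_sub_sub_le v hv w hw := hF.norm_sub_sub_sub_le v (hK hv) w (hK hw)

lemma continuous_apply (hF : IsKurzweilClass F K h) (hx : x ∈ K) : Continuous (F x) := by
  refine continuous_iff_continuousAt.2 fun t => tendsto_iff_norm_sub_tendsto_zero.2 ?_
  have hlim : Tendsto (fun s => |h s - h t|) (𝓝 t) (𝓝 0) := by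
    simpa using ((hF.continuous.tendsto t).sub_const (h t)).abs
  refine squeeze_zero (fun _ => norm_nonneg _) (fun s => ?_) hlim
  rcases le_total t s with hts | hst
  · exact (hF.norm_sub_le x hx t s hts).trans (le_abs_self _)
  · rw [norm_sub_rev, abs_sub_comm]
    exact (hF.norm_sub_le x hx s t hst).trans (le_abs_self _)

lemma reflect (hF : IsKurzweilClass F K h) :
    IsKurzweilClass (fun v t => F v (-t)) K (fun t => -h (-t)) where
  monotone _ _ hst := neg_le_neg (hF.monotone (neg_le_neg hst))
  continuous := (hF.continuous.comp continuous_neg).neg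
  norm_sub_le v hv s t hst := by
    rw [norm_sub_rev, neg_sub_neg]
    exact hF.norm_sub_le v hv _ _ (neg_le_neg hst)
  norm_sub_sub_sub_le v hv w hw s t hst := by
    rw [← norm_neg, neg_sub', neg_sub, neg_sub, neg_sub_neg]
    exact hF.norm_sub_sub_sub_le v hv w hw _ _ (neg_le_neg hst)

lemma isApproxSolution_euler (hF : IsKurzweilClass F K h)
    (hK : Metric.closedBall x (h b - h a) ⊆ K) (hε : h b - h a ≤ ε) :
    IsApproxSolution F K h ε (fun r => x + (F x r - F x a)) (Icc a b) := by
  rcases lt_or_ge b a with hba | hab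
  · rw [Icc_eq_empty_of_lt hba]
    exact ⟨mapsTo_empty _ _, continuousOn_empty _, fun s t hst hS =>
      (hS (left_mem_Icc.2 hst)).elim⟩
  have hx : x ∈ K := hK (Metric.mem_closedBall_self (sub_nonneg.2 (hF.monotone hab)))
  have hdist : ∀ r ∈ Icc a b, ‖F x r - F x a‖ ≤ h b - h a := fun r hr =>
    (hF.norm_sub_le x hx a r hr.1).trans (sub_le_sub_right (hF.monotone hr.2) _)
  refine ⟨fun r hr => hK (by simpa [dist_eq_norm] using hdist r hr), ?_, ?_⟩
  · exact (continuous_const.add ((hF.continuous_apply hx).sub continuous_const)).continuousOn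
  · intro s t hst hS v hv ω hω
    have hs := left_mem_Icc.2 hst
    have hxv : ‖x - v‖ ≤ ω + ε := by
      calc ‖x - v‖ = ‖(x + (F x s - F x a) - v) - (F x s - F x a)‖ := by congr 1; abel
        _ ≤ ω + ε := norm_sub_le_of_le (hω s hs) ((hdist s (hS hs)).trans hε)
    calc ‖x + (F x t - F x a) - (x + (F x s - F x a)) - (F v t - F v s)‖
        = ‖(F x t - F x s) - (F v t - F v s)‖ := by congr 1; abel
      _ ≤ ‖x - v‖ * (h t - h s) := hF.norm_sub_sub_sub_le x hx v hv s t hst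
      _ ≤ (ω + ε) * (h t - h s) :=
        mul_le_mul_of_nonneg_right hxv (sub_nonneg.2 (hF.monotone hst))

end IsKurzweilClass

namespace IsApproxSolution

lemma mono (hy : IsApproxSolution F K h ε y S) (hS : S' ⊆ S) : IsApproxSolution F K h ε y S' where
  mapsTo := hy.mapsTo.mono_left hS
  continuousOn := hy.continuousOn.mono hS
  norm_sub_sub_le s t hst hS' := hy.norm_sub_sub_le s t hst (hS'.trans hS)

lemma congr (hy : IsApproxSolution F K h ε y S) (hyz : EqOn y z S) :
    IsApproxSolution F K h ε z S where
  mapsTo := hy.mapsTo.congr hyz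
  continuousOn := hy.continuousOn.congr hyz.symm
  norm_sub_sub_le s t hst hS v hv ω hω := by
    rw [← hyz (hS (left_mem_Icc.2 hst)), ← hyz (hS (right_mem_Icc.2 hst))]
    exact hy.norm_sub_sub_le s t hst hS v hv ω fun r hr => hyz (hS hr) ▸ hω r hr

lemma reflect (hy : IsApproxSolution (fun v t => F v (-t)) K (fun t => -h (-t)) ε y S) :
    IsApproxSolution F K h ε (fun t => y (-t)) (-S) where
  mapsTo _ ht := hy.mapsTo ht
  continuousOn := hy.continuousOn.comp continuousOn_neg fun _ ht => ht
  norm_sub_sub_le s t hst hS v hv ω hω := by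
    have hneg : ∀ r ∈ Icc (-t) (-s), -r ∈ Icc s t := fun r hr =>
      ⟨le_neg.2 hr.2, neg_le.2 hr.1⟩
    have H := hy.norm_sub_sub_le (-t) (-s) (neg_le_neg hst)
      (fun r hr => by simpa using hS (hneg r hr)) v hv ω
      fun r hr => by simpa using hω (-r) (hneg r hr)
    simp only [neg_neg, neg_sub_neg] at H
    rwa [← norm_neg, neg_sub', neg_sub, neg_sub]

lemma union (hac : a ≤ c) (hcb : c ≤ b) (hl : IsApproxSolution F K h ε y (Icc a c))
    (hr : IsApproxSolution F K h ε y (Icc c b)) : IsApproxSolution F K h ε y (Icc a b) where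
  mapsTo := Icc_union_Icc_eq_Icc hac hcb ▸ hl.mapsTo.union_union hr.mapsTo |>.mono_right (by simp)
  continuousOn := by
    rw [← Icc_union_Icc_eq_Icc hac hcb]
    exact hl.continuousOn.union_of_isClosed hr.continuousOn isClosed_Icc isClosed_Icc
  norm_sub_sub_le s t hst hS v hv ω hω := by
    obtain ⟨has, htb⟩ := (Icc_subset_Icc_iff hst).1 hS
    rcases le_total t c with htc | hct
    · exact hl.norm_sub_sub_le s t hst (Icc_subset_Icc has htc) v hv ω hω
    rcases le_total c s with hcs | hsc
    · exact hr.norm_sub_sub_le s t hst (Icc_subset_Icc hcs htb) v hv ω hω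
    calc ‖y t - y s - (F v t - F v s)‖
        = ‖(y c - y s - (F v c - F v s)) + (y t - y c - (F v t - F v c))‖ := by congr 1; abel
      _ ≤ (ω + ε) * (h c - h s) + (ω + ε) * (h t - h c) := norm_add_le_of_le
        (hl.norm_sub_sub_le s c hsc (Icc_subset_Icc_left has) v hv ω
          fun r hr => hω r ⟨hr.1, hr.2.trans hct⟩)
        (hr.norm_sub_sub_le c t hct (Icc_subset_Icc_right htb) v hv ω
          fun r hr => hω r ⟨hsc.trans hr.1, hr.2⟩)
      _ = (ω + ε) * (h t - h s) := by ring

lemma glue (hac : a ≤ c) (hcb : c ≤ b) (hy : IsApproxSolution F K h ε y (Icc a c))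
    (hz : IsApproxSolution F K h ε z (Icc c b)) (hyz : y c = z c) :
    IsApproxSolution F K h ε (fun r => if r ≤ c then y r else z r) (Icc a b) := by
  refine union hac hcb (hy.congr fun r hr => (if_pos hr.2).symm) (hz.congr fun r hr => ?_)
  rcases hr.1.eq_or_lt with rfl | hcr
  · simp [hyz]
  · exact (if_neg hcr.not_ge).symm

lemma norm_sub_sub_sub_le (hab : a ≤ b) (hy : IsApproxSolution F K h ε y (Icc a b))
    (hz : IsApproxSolution F K h ε' z (Icc a b)) (hω : ∀ r ∈ Icc a b, ‖y r - z r‖ ≤ ω) :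
    ‖(y b - z b) - (y a - z a)‖ ≤ (ω + ε + ε') * (h b - h a) := by
  have hunif := Metric.uniformContinuousOn_iff.1
    (isCompact_Icc.uniformContinuousOn_of_continuous hy.continuousOn)
  refine norm_sub_le_mul_of_short_steps (f := fun r => y r - z r) hab fun η hη => ?_
  obtain ⟨δ, hδ, hosc⟩ := hunif (η / 2) (half_pos hη)
  refine ⟨δ, hδ, fun c c' hac hcc' hcb hlt => ?_⟩
  have hsub : Icc c c' ⊆ Icc a b := Icc_subset_Icc hac hcb
  have hc : c ∈ Icc a b := hsub (left_mem_Icc.2 hcc')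
  have hyc : ∀ r ∈ Icc c c', ‖y r - y c‖ ≤ η / 2 := fun r hr => by
    rw [← dist_eq_norm]
    refine (hosc r (hsub hr) c hc ?_).le
    rw [Real.dist_eq, abs_of_nonneg (sub_nonneg.2 hr.1)]
    linarith [hr.2]
  have hzc : ∀ r ∈ Icc c c', ‖z r - y c‖ ≤ ω + η / 2 := fun r hr =>
    calc ‖z r - y c‖ ≤ ‖z r - y r‖ + ‖y r - y c‖ := norm_sub_le_norm_sub_add_norm_sub ..
      _ ≤ ω + η / 2 := add_le_add (norm_sub_rev (y r) (z r) ▸ hω r (hsub hr)) (hyc r hr)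
  calc ‖(y c' - z c') - (y c - z c)‖
      = ‖(y c' - y c - (F (y c) c' - F (y c) c)) - (z c' - z c - (F (y c) c' - F (y c) c))‖ := by
        congr 1; abel
    _ ≤ (η / 2 + ε) * (h c' - h c) + (ω + η / 2 + ε') * (h c' - h c) := norm_sub_le_of_le
        (hy.norm_sub_sub_le c c' hcc' hsub _ (hy.mapsTo hc) _ hyc)
        (hz.norm_sub_sub_le c c' hcc' hsub _ (hy.mapsTo hc) _ hzc)
    _ = (ω + ε + ε' + η) * (h c' - h c) := by ring

lemma norm_sub_le_two_mul (hh : Monotone h) (hvar : h b - h a ≤ 1 / 2) (hε : 0 ≤ ε) (hε' : 0 ≤ ε')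
    (hy : IsApproxSolution F K h ε y (Icc a b)) (hz : IsApproxSolution F K h ε' z (Icc a b))
    (hc : c ∈ Icc a b) {t : ℝ} (ht : t ∈ Icc a b) :
    ‖y t - z t‖ ≤ 2 * ‖y c - z c‖ + ε + ε' := by
  obtain ⟨u, hu, hmax⟩ := isCompact_Icc.exists_isMaxOn ⟨c, hc⟩
    (hy.continuousOn.sub hz.continuousOn).norm
  have hω : ∀ r ∈ Icc a b, ‖y r - z r‖ ≤ ‖y u - z u‖ := fun r hr => hmax hr
  have hincr : ∀ p ∈ Icc a b, ∀ q ∈ Icc a b, p ≤ q →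
      ‖(y q - z q) - (y p - z p)‖ ≤ (‖y u - z u‖ + ε + ε') * (1 / 2) := by
    intro p hp q hq hpq
    have hsub : Icc p q ⊆ Icc a b := Icc_subset_Icc hp.1 hq.2
    refine (norm_sub_sub_sub_le hpq (hy.mono hsub) (hz.mono hsub) fun r hr =>
      hω r (hsub hr)).trans (mul_le_mul_of_nonneg_left ?_ (by positivity))
    linarith [hh hp.1, hh hq.2]
  have hcu : ‖(y u - z u) - (y c - z c)‖ ≤ (‖y u - z u‖ + ε + ε') * (1 / 2) := by
    rcases le_total c u with hcu | huc
    · exact hincr c hc u hu hcu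
    · exact norm_sub_rev (y c - z c) (y u - z u) ▸ hincr u hu c hc huc
  linarith [hω t ht, norm_le_norm_add_norm_sub (y c - z c) (y u - z u),
    norm_sub_rev (y u - z u) (y c - z c)]

lemma eq_of_eq {p q : ℝ} (hh : Monotone h) (hpq : |h q - h p| ≤ 1 / 2)
    (hy : IsApproxSolution F K h 0 y (uIcc p q)) (hz : IsApproxSolution F K h 0 z (uIcc p q))
    (hyz : y p = z p) : y q = z q := by
  have hvar : h (max p q) - h (min p q) ≤ 1 / 2 := by
    rwa [hh.map_max, hh.map_min, max_sub_min_eq_abs]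
  have := norm_sub_le_two_mul hh hvar le_rfl le_rfl hy hz left_mem_uIcc right_mem_uIcc
  rw [hyz, sub_self, norm_zero, mul_zero, add_zero, add_zero] at this
  exact sub_eq_zero.1 (norm_le_zero_iff.1 this)

lemma of_tendstoUniformlyOn {Y : ℕ → ℝ → V} {e : ℕ → ℝ} (hK : IsClosed K)
    (hY : ∀ n, IsApproxSolution F K h (e n) (Y n) S) (hlim : TendstoUniformlyOn Y y atTop S)
    (he : Tendsto e atTop (𝓝 ε)) : IsApproxSolution F K h ε y S where
  mapsTo t ht := hK.mem_of_tendsto (hlim.tendsto_at ht) (.of_forall fun n => (hY n).mapsTo ht)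
  continuousOn := hlim.continuousOn (.of_forall fun n => (hY n).continuousOn)
  norm_sub_sub_le s t hst hS v hv ω hω := by
    refine le_mul_of_forall_pos_le_add_mul fun η hη => ?_
    have hnorm : Tendsto (fun n => ‖Y n t - Y n s - (F v t - F v s)‖) atTop
        (𝓝 ‖y t - y s - (F v t - F v s)‖) :=
      ((hlim.tendsto_at (hS (right_mem_Icc.2 hst))).sub
        (hlim.tendsto_at (hS (left_mem_Icc.2 hst))) |>.sub_const _).norm
    have hbound : Tendsto (fun n => (ω + η + e n) * (h t - h s)) atTop
        (𝓝 ((ω + ε + η) * (h t - h s))) := by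
      rw [add_right_comm]
      exact (he.const_add _).mul_const _
    refine le_of_tendsto_of_tendsto hnorm hbound ?_
    filter_upwards [Metric.tendstoUniformlyOn_iff.1 hlim η hη] with n hn
    refine (hY n).norm_sub_sub_le s t hst hS v hv _ fun r hr => ?_
    calc ‖Y n r - v‖ ≤ ‖Y n r - y r‖ + ‖y r - v‖ := norm_sub_le_norm_sub_add_norm_sub ..
      _ ≤ η + ω := add_le_add (by rw [← dist_eq_norm']; exact (hn r (hS hr)).le) (hω r hr)
      _ = ω + η := add_comm ..

end IsApproxSolution

namespace IsKurzweilClass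

lemma exists_isApproxSolution_pos (hF : IsKurzweilClass F K h) (hab : a ≤ b)
    (hK : Metric.closedBall x₀ (h b - h a) ⊆ K) (hε : 0 < ε) :
    ∃ y, y a = x₀ ∧ IsApproxSolution F K h ε y (Icc a b) := by
  have hunif := Metric.uniformContinuousOn_iff.1
    (isCompact_Icc.uniformContinuousOn_of_continuous (s := Icc a b) hF.continuous.continuousOn)
  obtain ⟨δ, hδ, hosc⟩ := hunif ε hε
  have euler : ∀ c c' x, a ≤ c → c ≤ c' → c' ≤ b → c' - c < δ → ‖x - x₀‖ ≤ h c - h a →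
      IsApproxSolution F K h ε (fun r => x + (F x r - F x c)) (Icc c c') := by
    intro c c' x hac hcc' hcb hlt hx
    have hlt' : dist c' c < δ := by rwa [Real.dist_eq, abs_of_nonneg (sub_nonneg.2 hcc')]
    refine hF.isApproxSolution_euler ((Metric.closedBall_subset_closedBall' ?_).trans hK)
      ((le_abs_self _).trans (hosc c' ⟨hac.trans hcc', hcb⟩ c ⟨hac, hcc'.trans hcb⟩ hlt').le)
    rw [dist_eq_norm]
    linarith [hF.monotone hcb]
  suffices ∃ y, y a = x₀ ∧ IsApproxSolution F K h ε y (Icc a b) ∧ ‖y b - x₀‖ ≤ h b - h a by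
    obtain ⟨y, hya, hy, -⟩ := this
    exact ⟨y, hya, hy⟩
  refine induction_on_short_steps (p := fun c => ∃ y, y a = x₀ ∧
    IsApproxSolution F K h ε y (Icc a c) ∧ ‖y c - x₀‖ ≤ h c - h a) hab hδ ?_ ?_
  · exact ⟨_, by simp, euler a a x₀ le_rfl le_rfl hab (by simpa) (by simp), by simp⟩
  rintro c c' hac hcc' hcb hlt ⟨y, hya, hy, hyc⟩
  have hz := euler c c' (y c) hac hcc' hcb hlt hyc
  refine ⟨_, (if_pos hac).trans hya, hy.glue hac hcc' hz (by simp), ?_⟩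
  split_ifs with hc'c
  · rwa [hc'c.antisymm hcc']
  · calc ‖y c + (F (y c) c' - F (y c) c) - x₀‖
        = ‖(F (y c) c' - F (y c) c) + (y c - x₀)‖ := by congr 1; abel
      _ ≤ (h c' - h c) + (h c - h a) :=
        norm_add_le_of_le (hF.norm_sub_le _ (hy.mapsTo (right_mem_Icc.2 hac)) c c' hcc') hyc
      _ = h c' - h a := by ring

variable [CompleteSpace V]

lemma exists_isApproxSolution_zero (hF : IsKurzweilClass F K h) (hKc : IsClosed K) (hab : a ≤ b)
    (hvar : h b - h a ≤ 1 / 2) (hK : Metric.closedBall x₀ (h b - h a) ⊆ K) :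
    ∃ y, y a = x₀ ∧ IsApproxSolution F K h 0 y (Icc a b) := by
  have hpos : ∀ n : ℕ, (0 : ℝ) < 1 / (n + 1) := fun n => Nat.one_div_pos_of_nat
  have hlim := tendsto_one_div_add_atTop_nhds_zero_nat (𝕜 := ℝ)
  choose Y hYa hY using fun n : ℕ => hF.exists_isApproxSolution_pos hab hK (hpos n)
  have ha : a ∈ Icc a b := left_mem_Icc.2 hab
  have hdist : ∀ n m : ℕ, ∀ t ∈ Icc a b, ‖Y n t - Y m t‖ ≤ 1 / (n + 1) + 1 / (m + 1) := by
    intro n m t ht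
    have := IsApproxSolution.norm_sub_le_two_mul hF.monotone hvar (hpos n).le (hpos m).le
      (hY n) (hY m) ha ht
    rwa [hYa, hYa, sub_self, norm_zero, mul_zero, zero_add] at this
  have hcauchy : UniformCauchySeqOn Y atTop (Icc a b) := by
    refine Metric.uniformCauchySeqOn_iff.2 fun ε hε => ?_
    obtain ⟨N, hN⟩ := eventually_atTop.1 (hlim.eventually (gt_mem_nhds (half_pos hε)))
    refine ⟨N, fun n hn m hm t ht => ?_⟩
    rw [dist_eq_norm]
    linarith [hdist n m t ht, hN n hn, hN m hm]
  choose! y hy using fun t ht => cauchySeq_tendsto_of_complete (hcauchy.cauchySeq (x := t) ht)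
  have hYy : TendstoUniformlyOn Y y atTop (Icc a b) :=
    hcauchy.tendstoUniformlyOn_of_tendsto hy
  refine ⟨y, ?_, .of_tendstoUniformlyOn hKc hY hYy hlim⟩
  exact tendsto_nhds_unique (hy a ha) (by simp only [hYa, tendsto_const_nhds])

lemma exists_isApproxSolution_zero_of_mem_Icc (hF : IsKurzweilClass F K h) (hKc : IsClosed K)
    (hc : c ∈ Icc a b) (hvar : h b - h a ≤ 1 / 2)
    (hK : Metric.closedBall x₀ (h b - h a) ⊆ K) :
    ∃ y, y c = x₀ ∧ IsApproxSolution F K h 0 y (Icc a b) := by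
  have hac := hF.monotone hc.1
  have hcb := hF.monotone hc.2
  obtain ⟨z, hzc, hz⟩ := hF.exists_isApproxSolution_zero hKc hc.2 (by linarith)
    ((Metric.closedBall_subset_closedBall (by linarith)).trans hK)
  obtain ⟨w, hwc, hw⟩ := hF.reflect.exists_isApproxSolution_zero hKc (neg_le_neg hc.1)
    (by simp only [neg_neg]; linarith)
    ((Metric.closedBall_subset_closedBall (by simp only [neg_neg]; linarith)).trans hK)
  have hw' := hw.reflect
  rw [neg_Icc, neg_neg, neg_neg] at hw'
  exact ⟨_, (if_pos le_rfl).trans hwc, hw'.glue hc.1 hc.2 hz (hwc.trans hzc.symm)⟩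

end IsKurzweilClass

end ApproximateSolutions

section GeneralizedODE

variable {V : Type*} [NormedAddCommGroup V]

/-- `y` solves the Kurzweil generalized differential equation `dy = DF(y, t)` on `S`. -/
structure IsGDESolutionOn (F : V → ℝ → V) (y : ℝ → V) (S : Set ℝ) : Prop where
  continuousOn : ContinuousOn y S
  hasKurzweilIntegral : ∀ s t, s ≤ t → Icc s t ⊆ S → HasKurzweilIntegral F y s t (y t - y s)

/-- `F` belongs to a Kurzweil class on every ball, with a control function depending on the
ball. -/
def IsLocallyKurzweil (F : V → ℝ → V) : Prop :=
  ∀ R : ℝ, ∃ h : ℝ → ℝ, IsKurzweilClass F (Metric.closedBall 0 R) h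

variable {F : V → ℝ → V} {K : Set V} {h : ℝ → ℝ} {a b c t₀ : ℝ} {x₀ : V} {y z : ℝ → V}
  {S S' : Set ℝ}

lemma IsApproxSolution.hasKurzweilIntegral (hy : IsApproxSolution F K h 0 y (Icc a b)) :
    HasKurzweilIntegral F y a b (y b - y a) := by
  refine ((meshFilter_hasBasis a b).tendsto_iff Metric.nhds_basis_ball).2 fun ε hε => ?_
  obtain ⟨η, hη, hηε⟩ := exists_pos_mul_lt hε (h b - h a)
  obtain ⟨δ, hδ, hosc⟩ := Metric.uniformContinuousOn_iff.1
    (isCompact_Icc.uniformContinuousOn_of_continuous hy.continuousOn) η hη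
  refine ⟨δ, hδ, fun P hP => ?_⟩
  have hstep : ∀ i < P.k, ‖y (P.t (i + 1)) - y (P.t i) -
      (F (y (P.tag i)) (P.t (i + 1)) - F (y (P.tag i)) (P.t i))‖ ≤
        η * h (P.t (i + 1)) - η * h (P.t i) := by
    intro i hi
    have hsub : Icc (P.t i) (P.t (i + 1)) ⊆ Icc a b :=
      Icc_subset_Icc (P.t_mem_Icc hi.le).1 (P.t_mem_Icc hi).2
    have htag := P.tag_mem_Icc hi
    rw [← mul_sub]
    refine (hy.norm_sub_sub_le _ _ (P.lt i hi).le hsub _ (hy.mapsTo htag) η fun r hr => ?_).trans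
      (by rw [add_zero])
    rw [← dist_eq_norm]
    exact (hosc r (hsub hr) _ htag
      ((Real.dist_le_of_mem_Icc hr (P.tag_mem i hi)).trans_lt (hP i hi))).le
  rw [Metric.mem_ball', dist_eq_norm]
  refine (P.norm_sub_sub_sum_le (h := fun r => η * h r) hstep).trans_lt ?_
  rwa [← mul_sub, mul_comm]

lemma HasKurzweilIntegral.norm_sub_le {ω : ℝ} {v L : V} (hF : IsKurzweilClass F K h)
    (hab : a < b) (hv : v ∈ K) (hyK : MapsTo y (Icc a b) K)
    (hω : ∀ r ∈ Icc a b, ‖y r - v‖ ≤ ω) (hL : HasKurzweilIntegral F y a b L) :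
    ‖L - (F v b - F v a)‖ ≤ ω * (h b - h a) := by
  have := meshFilter_neBot hab
  refine le_of_tendsto (hL.sub_const _).norm (.of_forall fun P => ?_)
  rw [norm_sub_rev, mul_sub]
  refine P.norm_sub_sub_sum_le (h := fun r => ω * h r) fun i hi => ?_
  have htag := P.tag_mem_Icc hi
  rw [norm_sub_rev, ← mul_sub]
  exact (hF.norm_sub_sub_sub_le _ (hyK htag) v hv _ _ (P.lt i hi).le).trans
    (mul_le_mul_of_nonneg_right (hω _ htag) (sub_nonneg.2 (hF.monotone (P.lt i hi).le)))

lemma isApproxSolution_zero_iff (hF : IsKurzweilClass F K h) :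
    IsApproxSolution F K h 0 y S ↔ MapsTo y S K ∧ IsGDESolutionOn F y S := by
  refine ⟨fun hy => ⟨hy.mapsTo, hy.continuousOn, fun _ _ _ hS =>
    (hy.mono hS).hasKurzweilIntegral⟩, fun ⟨hyK, hy⟩ => ⟨hyK, hy.continuousOn, ?_⟩⟩
  intro s t hst hS v hv ω hω
  rcases hst.eq_or_lt with rfl | hlt
  · simp
  · rw [add_zero]
    exact (hy.hasKurzweilIntegral s t hst hS).norm_sub_le hF hlt hv (hyK.mono_left hS) hω

lemma IsLocallyKurzweil.exists_isGDESolutionOn [CompleteSpace V] (hF : IsLocallyKurzweil F)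
    (β R : ℝ) : ∃ a b, Icc a b ∈ 𝓝 β ∧ ∀ t ∈ Icc a b, ∀ x : V, ‖x‖ ≤ R →
      ∃ w, w t = x ∧ IsGDESolutionOn F w (Icc a b) := by
  obtain ⟨h, hh⟩ := hF (R + 1 / 2)
  have hvar : ∀ᶠ δ in 𝓝[>] (0 : ℝ), h (β + δ) - h (β - δ) < 1 / 2 := by
    have hcont : Continuous fun δ => h (β + δ) - h (β - δ) :=
      (hh.continuous.comp (continuous_const.add continuous_id)).sub
        (hh.continuous.comp (continuous_const.sub continuous_id))
    exact nhdsWithin_le_nhds (hcont.continuousAt.eventually_lt_const (by simp))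
  obtain ⟨δ, hδ, hδ₀⟩ := (hvar.and self_mem_nhdsWithin).exists
  refine ⟨β - δ, β + δ, Icc_mem_nhds (sub_lt_self _ hδ₀) (lt_add_of_pos_right _ hδ₀), ?_⟩
  intro t ht x hx
  have hball : Metric.closedBall x (h (β + δ) - h (β - δ)) ⊆ Metric.closedBall 0 (R + 1 / 2) :=
    Metric.closedBall_subset_closedBall' (by rw [dist_zero_right]; linarith)
  obtain ⟨w, hwt, hw⟩ :=
    hh.exists_isApproxSolution_zero_of_mem_Icc Metric.isClosed_closedBall ht hδ.le hball
  exact ⟨w, hwt, ((isApproxSolution_zero_iff hh).1 hw).2⟩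

namespace IsGDESolutionOn

lemma mono (hy : IsGDESolutionOn F y S) (hS : S' ⊆ S) : IsGDESolutionOn F y S' where
  continuousOn := hy.continuousOn.mono hS
  hasKurzweilIntegral s t hst hS' := hy.hasKurzweilIntegral s t hst (hS'.trans hS)

lemma congr (hy : IsGDESolutionOn F y S) (hyz : EqOn y z S) : IsGDESolutionOn F z S where
  continuousOn := hy.continuousOn.congr hyz.symm
  hasKurzweilIntegral s t hst hS := by
    rw [← hyz (hS (left_mem_Icc.2 hst)), ← hyz (hS (right_mem_Icc.2 hst))]
    exact (hy.hasKurzweilIntegral s t hst hS).congr (hyz.mono hS)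

lemma eqOn_Icc (hF : IsLocallyKurzweil F) (hy : IsGDESolutionOn F y (Icc a b))
    (hz : IsGDESolutionOn F z (Icc a b)) (hc : c ∈ Icc a b) (hyz : y c = z c) :
    EqOn y z (Icc a b) := by
  obtain ⟨R, hR⟩ := isCompact_Icc.exists_bound_of_continuousOn
    (hy.continuousOn.prodMk hz.continuousOn)
  obtain ⟨h, hh⟩ := hF R
  have hy' := (isApproxSolution_zero_iff hh).2
    ⟨fun r hr => mem_closedBall_zero_iff.2 ((norm_fst_le _).trans (hR r hr)), hy⟩
  have hz' := (isApproxSolution_zero_iff hh).2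
    ⟨fun r hr => mem_closedBall_zero_iff.2 ((norm_snd_le _).trans (hR r hr)), hz⟩
  have hprop : ∀ p ∈ Icc a b, ∀ q ∈ Icc a b, |h q - h p| ≤ 1 / 2 → y p = z p → y q = z q :=
    fun p hp q hq hpq heq =>
      have hsub := ordConnected_Icc.uIcc_subset hp hq
      (hy'.mono hsub).eq_of_eq hh.monotone hpq (hz'.mono hsub) heq
  have hiff : ∀ t ∈ Icc a b, (y c = z c ↔ y t = z t) := fun t ht => by
    refine isPreconnected_Icc.induction₂ (fun p q => (y p = z p ↔ y q = z q)) (fun p hp => ?_)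
      (fun _ _ _ _ _ _ => Iff.trans) (fun _ _ _ _ => Iff.symm) hc ht
    have hnear : ∀ᶠ q in 𝓝[Icc a b] p, |h q - h p| < 1 / 2 :=
      (hh.continuous.sub continuous_const).abs.continuousWithinAt.eventually_lt_const (by simp)
    filter_upwards [hnear, self_mem_nhdsWithin] with q hq hqab
    exact ⟨hprop p hp q hqab hq.le, hprop q hqab p hp (abs_sub_comm (h q) (h p) ▸ hq.le)⟩
  exact fun t ht => (hiff t ht).1 hyz

lemma eqOn (hF : IsLocallyKurzweil F) (hS : S.OrdConnected) (hy : IsGDESolutionOn F y S)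
    (hz : IsGDESolutionOn F z S) (hc : c ∈ S) (hyz : y c = z c) : EqOn y z S := fun _ ht =>
  have hsub := hS.uIcc_subset hc ht
  eqOn_Icc hF (hy.mono hsub) (hz.mono hsub) left_mem_uIcc hyz right_mem_uIcc

lemma union_Icc (hF : IsLocallyKurzweil F) (hac : a ≤ c) (hcb : c ≤ b)
    (hl : IsGDESolutionOn F y (Icc a c)) (hr : IsGDESolutionOn F y (Icc c b)) :
    IsGDESolutionOn F y (Icc a b) := by
  have hcont : ContinuousOn y (Icc a b) := by
    rw [← Icc_union_Icc_eq_Icc hac hcb]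
    exact hl.continuousOn.union_of_isClosed hr.continuousOn isClosed_Icc isClosed_Icc
  obtain ⟨R, hR⟩ := isCompact_Icc.exists_bound_of_continuousOn hcont
  obtain ⟨h, hh⟩ := hF R
  have hmaps : MapsTo y (Icc a b) (Metric.closedBall 0 R) := fun r hr =>
    mem_closedBall_zero_iff.2 (hR r hr)
  have hl' := (isApproxSolution_zero_iff hh).2 ⟨hmaps.mono_left (Icc_subset_Icc_right hcb), hl⟩
  have hr' := (isApproxSolution_zero_iff hh).2 ⟨hmaps.mono_left (Icc_subset_Icc_left hac), hr⟩
  exact ((isApproxSolution_zero_iff hh).1 (hl'.union hac hcb hr')).2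

lemma of_uIcc (hF : IsLocallyKurzweil F) (hcont : ContinuousOn y S)
    (H : ∀ t ∈ S, IsGDESolutionOn F y (uIcc c t)) : IsGDESolutionOn F y S where
  continuousOn := hcont
  hasKurzweilIntegral s t hst hS := by
    have hs := H s (hS (left_mem_Icc.2 hst))
    have ht := H t (hS (right_mem_Icc.2 hst))
    rcases le_total c s with hcs | hsc
    · rw [uIcc_of_le (hcs.trans hst)] at ht
      exact ht.hasKurzweilIntegral s t hst (Icc_subset_Icc_left hcs)
    rw [uIcc_of_ge hsc] at hs
    rcases le_total t c with htc | hct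
    · exact hs.hasKurzweilIntegral s t hst (Icc_subset_Icc_right htc)
    · rw [uIcc_of_le hct] at ht
      exact (union_Icc hF hsc hct hs ht).hasKurzweilIntegral s t hst Subset.rfl

lemma union (hF : IsLocallyKurzweil F) (hS : S.OrdConnected) (hS' : S'.OrdConnected)
    (hSc : IsClosed S) (hSc' : IsClosed S') (hc : c ∈ S ∩ S') (hy : IsGDESolutionOn F y S)
    (hy' : IsGDESolutionOn F y S') : IsGDESolutionOn F y (S ∪ S') :=
  of_uIcc (c := c) hF (hy.continuousOn.union_of_isClosed hy'.continuousOn hSc hSc') fun _ ht =>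
    ht.elim (fun ht => hy.mono (hS.uIcc_subset hc.1 ht))
      fun ht => hy'.mono (hS'.uIcc_subset hc.2 ht)

end IsGDESolutionOn

lemma isGDESolutionOn_iff_of_mem (hF : IsLocallyKurzweil F) (hS : S.OrdConnected) (hc : c ∈ S) :
    IsGDESolutionOn F y S ↔ ContinuousOn y S ∧ ∀ t ∈ S,
      HasKurzweilIntegral F y c t (y t - y c) ∧ HasKurzweilIntegral F y t c (y c - y t) := by
  constructor
  · intro hy
    have hint : ∀ s ∈ S, ∀ t ∈ S, HasKurzweilIntegral F y s t (y t - y s) := fun s hs t ht =>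
      (le_total s t).elim (fun hst => hy.hasKurzweilIntegral s t hst (hS.out hs ht)) .of_le
    exact ⟨hy.continuousOn, fun t ht => ⟨hint c hc t ht, hint t ht c hc⟩⟩
  rintro ⟨hcont, hint⟩
  refine .of_uIcc (c := c) hF hcont fun t ht => ⟨hcont.mono (hS.uIcc_subset hc ht), ?_⟩
  intro p q hpq hsub
  have hpS := hS.uIcc_subset hc ht (hsub (left_mem_Icc.2 hpq))
  have hqS := hS.uIcc_subset hc ht (hsub (right_mem_Icc.2 hpq))
  have hpqt := (Icc_subset_Icc_iff hpq).1 hsub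
  rcases le_total c t with hct | htc
  · rw [inf_eq_left.2 hct] at hpqt
    rcases hpqt.1.eq_or_lt with rfl | hcp
    · exact (hint q hqS).1
    · simpa using (hint p hpS).1.sub_left hcp (hint q hqS).1
  · rw [sup_eq_left.2 htc] at hpqt
    rcases hpqt.2.eq_or_lt with rfl | hqc
    · exact (hint p hpS).2
    · simpa using (hint q hqS).2.sub_right hqc (hint p hpS).2

/-- The times reached from `t₀` by some solution of `dy = DF(y, t)` with `y(t₀) = x₀`. -/
def existenceInterval (F : V → ℝ → V) (t₀ : ℝ) (x₀ : V) : Set ℝ :=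
  {t | ∃ z : ℝ → V, z t₀ = x₀ ∧ IsGDESolutionOn F z (uIcc t₀ t)}

open Classical in
/-- The maximal solution of `dy = DF(y, t)`, `y(t₀) = x₀`: at each time `t` of the existence
interval the value of any solution reaching `t`, and the junk value `0` elsewhere. -/
noncomputable def maximalSolution (F : V → ℝ → V) (t₀ : ℝ) (x₀ : V) (t : ℝ) : V :=
  if ht : t ∈ existenceInterval F t₀ x₀ then ht.choose t else 0

lemma ordConnected_existenceInterval : (existenceInterval F t₀ x₀).OrdConnected :=
  ordConnected_of_uIcc_subset_left fun _ ⟨z, hzt₀, hz⟩ _ hr =>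
    ⟨z, hzt₀, hz.mono (uIcc_subset_uIcc_left hr)⟩

lemma mem_existenceInterval_self [CompleteSpace V] (hF : IsLocallyKurzweil F) :
    t₀ ∈ existenceInterval F t₀ x₀ := by
  obtain ⟨a, b, hab, hloc⟩ := hF.exists_isGDESolutionOn t₀ ‖x₀‖
  obtain ⟨w, hwt₀, hw⟩ := hloc t₀ (mem_of_mem_nhds hab) x₀ le_rfl
  exact ⟨w, hwt₀, hw.mono (by simpa using mem_of_mem_nhds hab)⟩

lemma IsGDESolutionOn.eqOn_maximalSolution {t : ℝ} (hF : IsLocallyKurzweil F)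
    (hz : IsGDESolutionOn F z (uIcc t₀ t)) (hzt₀ : z t₀ = x₀) :
    EqOn z (maximalSolution F t₀ x₀) (uIcc t₀ t) := by
  intro r hr
  have hz' := hz.mono (uIcc_subset_uIcc_left hr)
  have hmem : r ∈ existenceInterval F t₀ x₀ := ⟨z, hzt₀, hz'⟩
  rw [maximalSolution, dif_pos hmem]
  obtain ⟨hwt₀, hw⟩ := hmem.choose_spec
  exact hz'.eqOn hF ordConnected_uIcc hw left_mem_uIcc (hzt₀.trans hwt₀.symm) right_mem_uIcc

lemma IsGDESolutionOn.subset_existenceInterval (hF : IsLocallyKurzweil F) (hS : S.OrdConnected)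
    (ht₀ : t₀ ∈ S) (hz : IsGDESolutionOn F z S) (hzt₀ : z t₀ = x₀) :
    S ⊆ existenceInterval F t₀ x₀ ∧ EqOn z (maximalSolution F t₀ x₀) S :=
  ⟨fun _ ht => ⟨z, hzt₀, hz.mono (hS.uIcc_subset ht₀ ht)⟩, fun _ ht =>
    (hz.mono (hS.uIcc_subset ht₀ ht)).eqOn_maximalSolution hF hzt₀ right_mem_uIcc⟩

namespace IsLocallyKurzweil

lemma isGDESolutionOn_maximalSolution_uIcc {t : ℝ} (hF : IsLocallyKurzweil F)
    (ht : t ∈ existenceInterval F t₀ x₀) :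
    IsGDESolutionOn F (maximalSolution F t₀ x₀) (uIcc t₀ t) := by
  obtain ⟨z, hzt₀, hz⟩ := ht
  exact hz.congr (hz.eqOn_maximalSolution hF hzt₀)

variable [CompleteSpace V]

lemma maximalSolution_self (hF : IsLocallyKurzweil F) : maximalSolution F t₀ x₀ t₀ = x₀ := by
  obtain ⟨z, hzt₀, hz⟩ := mem_existenceInterval_self (t₀ := t₀) (x₀ := x₀) hF
  exact (hz.eqOn_maximalSolution hF hzt₀ left_mem_uIcc).symm.trans hzt₀

lemma exists_subset_existenceInterval (hF : IsLocallyKurzweil F) (β R : ℝ) :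
    ∃ U ∈ 𝓝 β, ∀ t ∈ U, t ∈ existenceInterval F t₀ x₀ → ‖maximalSolution F t₀ x₀ t‖ ≤ R →
      U ⊆ existenceInterval F t₀ x₀ := by
  classical
  obtain ⟨a, b, hab, hloc⟩ := hF.exists_isGDESolutionOn β R
  refine ⟨Icc a b, hab, fun t ht hmem hR u hu => ?_⟩
  set y := maximalSolution F t₀ x₀
  obtain ⟨w, hwt, hw⟩ := hloc t ht (y t) hR
  have hy : IsGDESolutionOn F y (uIcc t₀ t) := hF.isGDESolutionOn_maximalSolution_uIcc hmem
  have hyw : EqOn y w (uIcc t₀ t ∩ Icc a b) :=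
    (hy.mono inter_subset_left).eqOn hF (ordConnected_uIcc.inter ordConnected_Icc)
      (hw.mono inter_subset_right) ⟨right_mem_uIcc, ht⟩ hwt.symm
  let v := (uIcc t₀ t).piecewise y w
  have hyv : EqOn y v (uIcc t₀ t) := fun r hr => (piecewise_eq_of_mem _ _ _ hr).symm
  have hwv : EqOn w v (Icc a b) := by
    intro r hr
    by_cases hrt : r ∈ uIcc t₀ t
    · exact (hyw ⟨hrt, hr⟩).symm.trans (hyv hrt)
    · exact (piecewise_eq_of_notMem _ _ _ hrt).symm
  have hv : IsGDESolutionOn F v (uIcc t₀ t ∪ Icc a b) :=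
    (hy.congr hyv).union hF ordConnected_uIcc ordConnected_Icc isClosed_Icc isClosed_Icc
      ⟨right_mem_uIcc, ht⟩ (hw.congr hwv)
  refine ⟨v, (hyv left_mem_uIcc).symm.trans hF.maximalSolution_self, hv.mono ?_⟩
  exact uIcc_subset_uIcc_union_uIcc.trans
    (union_subset_union_right _ (ordConnected_Icc.uIcc_subset ht hu))

lemma isOpen_existenceInterval (hF : IsLocallyKurzweil F) :
    IsOpen (existenceInterval F t₀ x₀) := by
  refine isOpen_iff_mem_nhds.2 fun t ht => ?_
  obtain ⟨U, hU, hsub⟩ := hF.exists_subset_existenceInterval (t₀ := t₀) (x₀ := x₀) t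
    ‖maximalSolution F t₀ x₀ t‖
  exact mem_of_superset hU (hsub t (mem_of_mem_nhds hU) ht le_rfl)

lemma isGDESolutionOn_maximalSolution (hF : IsLocallyKurzweil F) :
    IsGDESolutionOn F (maximalSolution F t₀ x₀) (existenceInterval F t₀ x₀) := by
  refine .of_uIcc hF (fun t ht => ?_) fun _ => hF.isGDESolutionOn_maximalSolution_uIcc
  obtain ⟨p, q, htpq, hpq, hsub⟩ :=
    exists_Icc_mem_subset_of_mem_nhds (hF.isOpen_existenceInterval.mem_nhds ht)
  have hle : p ≤ q := htpq.1.trans htpq.2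
  have hp := hF.isGDESolutionOn_maximalSolution_uIcc (hsub (left_mem_Icc.2 hle))
  have hq := hF.isGDESolutionOn_maximalSolution_uIcc (hsub (right_mem_Icc.2 hle))
  have hunion := hp.union hF ordConnected_uIcc ordConnected_uIcc isClosed_Icc isClosed_Icc
    ⟨left_mem_uIcc, left_mem_uIcc⟩ hq
  have hsubset : Icc p q ⊆ uIcc t₀ p ∪ uIcc t₀ q :=
    Icc_subset_uIcc.trans (uIcc_comm p t₀ ▸ uIcc_subset_uIcc_union_uIcc)
  exact ((hunion.continuousOn.mono hsubset).continuousAt hpq).continuousWithinAt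

lemma tendsto_norm_maximalSolution (hF : IsLocallyKurzweil F) {β : ℝ}
    (hβ : β ∉ existenceInterval F t₀ x₀) :
    Tendsto (fun t => ‖maximalSolution F t₀ x₀ t‖) (𝓝[existenceInterval F t₀ x₀] β) atTop := by
  refine tendsto_atTop.2 fun R => ?_
  obtain ⟨U, hU, hsub⟩ := hF.exists_subset_existenceInterval (t₀ := t₀) (x₀ := x₀) β R
  filter_upwards [self_mem_nhdsWithin, mem_nhdsWithin_of_mem_nhds hU] with t ht htU
  exact (lt_of_not_ge fun hR => hβ (hsub t htU ht hR (mem_of_mem_nhds hU))).le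

end IsLocallyKurzweil

end GeneralizedODE

section Intervals

variable {α : Type*} [LinearOrder α] [TopologicalSpace α] [OrderTopology α] {s : Set α} {β : α}

lemma notMem_of_isOpen_of_isLUB [DenselyOrdered α] [NoMaxOrder α] (hs : IsOpen s)
    (hβ : IsLUB s β) : β ∉ s := fun hmem => by
  have hright : s ∈ 𝓝[>] β := mem_nhdsWithin_of_mem_nhds (hs.mem_nhds hmem)
  obtain ⟨t, ht, hβt⟩ := Filter.nonempty_of_mem (inter_mem hright self_mem_nhdsWithin)
  exact (hβ.1 ht).not_gt hβt

lemma notMem_of_isOpen_of_isGLB [DenselyOrdered α] [NoMinOrder α] (hs : IsOpen s)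
    (hβ : IsGLB s β) : β ∉ s :=
  notMem_of_isOpen_of_isLUB (α := αᵒᵈ) hs hβ

lemma nhdsLT_le_nhdsWithin_of_isLUB (hs : s.OrdConnected) (hne : s.Nonempty) (hβ : IsLUB s β)
    (hmem : β ∉ s) : 𝓝[<] β ≤ 𝓝[s] β := by
  obtain ⟨a, ha⟩ := hne
  have haβ : a < β := (hβ.1 ha).lt_of_ne fun h => hmem (h ▸ ha)
  refine nhdsWithin_le_iff.2 (mem_of_superset (Ioo_mem_nhdsLT haβ) fun t ht => ?_)
  obtain ⟨b, hb, htb, -⟩ := hβ.exists_between ht.2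
  exact hs.out ha hb ⟨ht.1.le, htb.le⟩

lemma nhdsGT_le_nhdsWithin_of_isGLB (hs : s.OrdConnected) (hne : s.Nonempty) (hβ : IsGLB s β)
    (hmem : β ∉ s) : 𝓝[>] β ≤ 𝓝[s] β :=
  nhdsLT_le_nhdsWithin_of_isLUB (α := αᵒᵈ) hs.dual hne hβ hmem

end Intervals

section Primitives

/-- The function `t ↦ μ((0, t])`, extended to `t < 0` by `-μ((t, 0])`. -/
def primitive (μ : Set ℝ → ℝ) (t : ℝ) : ℝ :=
  μ (Ioc 0 t) - μ (Ioc t 0)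

namespace IsBMeasure

variable {μ : Set ℝ → ℝ} {A B : Set ℝ} {a b c : ℝ}

lemma union (hμ : IsBMeasure μ) (hA : MeasurableSet A) (hB : MeasurableSet B)
    (hA' : Bornology.IsBounded A) (hB' : Bornology.IsBounded B) (hd : Disjoint A B) :
    μ (A ∪ B) = μ A + μ B := by
  let C : ℕ → Set ℝ := fun
    | 0 => A
    | 1 => B
    | _ => ∅
  have hU : ⋃ n, C n = A ∪ B := subset_antisymm
    (iUnion_subset fun
      | 0 => subset_union_left
      | 1 => subset_union_right
      | _ + 2 => empty_subset _)
    (union_subset (subset_iUnion C 0) (subset_iUnion C 1))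
  have hsum := hμ.countably_additive C
    (fun
      | 0 => hA
      | 1 => hB
      | _ + 2 => .empty)
    (fun
      | 0 => hA'
      | 1 => hB'
      | _ + 2 => Bornology.isBounded_empty)
    (fun
      | 0, 0, h | 1, 1, h => absurd rfl h
      | 0, 1, _ => hd
      | 1, 0, _ => hd.symm
      | _ + 2, _, _ => empty_disjoint _
      | _, _ + 2, _ => disjoint_empty _)
    (hU ▸ hA'.union hB')
  have hzero : ∀ n ∉ Finset.range 2, μ (C n) = 0
    | 0, h | 1, h => by simp at h
    | _ + 2, _ => hμ.empty
  simpa [hU, Finset.sum_range_succ, C] using hsum.unique (hasSum_sum_of_ne_finset_zero hzero)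

lemma Ioc_add_Ioc (hμ : IsBMeasure μ) (hab : a ≤ b) (hbc : b ≤ c) :
    μ (Ioc a b) + μ (Ioc b c) = μ (Ioc a c) := by
  rw [← Ioc_union_Ioc_eq_Ioc hab hbc]
  exact (hμ.union measurableSet_Ioc measurableSet_Ioc (Metric.isBounded_Ioc _ _)
    (Metric.isBounded_Ioc _ _) (Ioc_disjoint_Ioc_of_le le_rfl)).symm

lemma Icc_eq_Ioc (hμ : IsBMeasure μ) (hab : a ≤ b) : μ (Icc a b) = μ (Ioc a b) := by
  rw [← Ioc_union_left hab, hμ.union measurableSet_Ioc (measurableSet_singleton a)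
    (Metric.isBounded_Ioc _ _) Bornology.isBounded_singleton (by simp), hμ.singleton, add_zero]

lemma primitive_sub (hμ : IsBMeasure μ) (hab : a ≤ b) :
    primitive μ b - primitive μ a = μ (Ioc a b) := by
  simp only [primitive]
  rcases le_total 0 a with ha | ha
  · simp [← hμ.Ioc_add_Ioc ha hab, ha, ha.trans hab, hμ.empty]
  rcases le_total b 0 with hb | hb
  · simp [← hμ.Ioc_add_Ioc hab hb, ha, hb, hμ.empty]
  · simp [← hμ.Ioc_add_Ioc ha hb, ha, hb, hμ.empty, add_comm]

end IsBMeasure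

lemma isBorelPartition_const {A : Set ℝ} (hA : MeasurableSet A) :
    IsBorelPartition A fun _ : Fin 1 => A :=
  ⟨fun _ => hA, Subsingleton.pairwise, iUnion_const A⟩

lemma TVLE.abs_le {μ : Set ℝ → ℝ} {m : Measure ℝ} (h : TVLE μ m) {A : Set ℝ}
    (hA : MeasurableSet A) (hA' : Bornology.IsBounded A) : |μ A| ≤ m.real A := by
  simpa [Measure.real] using h A hA' hA 1 _ (isBorelPartition_const hA)

lemma DiffLE.abs_sub_le {μ₁ μ₂ : Set ℝ → ℝ} {c : ℝ} {l : Measure ℝ} (h : DiffLE μ₁ μ₂ c l)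
    {A : Set ℝ} (hA : MeasurableSet A) (hA' : Bornology.IsBounded A) :
    |μ₁ A - μ₂ A| ≤ c * l.real A := by
  simpa [Measure.real] using h A hA' hA 1 _ (isBorelPartition_const hA)

lemma primitive_measureReal (m : Measure ℝ) :
    primitive m.real = fun t => ∫ _ in (0 : ℝ)..t, (1 : ℝ) ∂m := by
  ext t
  simp [primitive, intervalIntegral]

namespace GoodMeasure

variable {m : Measure ℝ} {s t : ℝ}

lemma primitive_sub (hm : GoodMeasure m) (hst : s ≤ t) :
    primitive m.real t - primitive m.real s = m.real (Ioc s t) := by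
  have := hm.1
  have hint : ∀ a b : ℝ, IntervalIntegrable (fun _ => (1 : ℝ)) m a b := fun _ _ => by simp
  rw [primitive_measureReal, intervalIntegral.integral_interval_sub_left (hint _ _) (hint _ _),
    intervalIntegral.integral_of_le hst]
  simp

lemma continuous_primitive (hm : GoodMeasure m) : Continuous (primitive m.real) := by
  have := hm.1
  have : NullSingletonClass m := ⟨hm.2⟩
  rw [primitive_measureReal]
  exact intervalIntegral.continuous_primitive (fun _ _ => by simp) 0

end GoodMeasure

end Primitives

section CurveIntegrals

variable {X : Type*} {ν : X → Set ℝ → ℝ} {y : ℝ → X} {a b L : ℝ}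

lemma isCurveIntegral_iff_tendsto :
    IsCurveIntegral ν y a b L ↔ Tendsto (RiemannSum ν y) (meshFilter a b) (𝓝 L) := by
  simp only [IsCurveIntegral, (meshFilter_hasBasis a b).tendsto_iff Metric.nhds_basis_ball,
    Metric.mem_ball', Real.dist_eq, mem_ofPred_eq]

lemma isCurveIntegral_of_le (hba : b ≤ a) : IsCurveIntegral ν y a b L := by
  rw [isCurveIntegral_iff_tendsto, meshFilter_eq_bot hba]
  exact tendsto_bot

lemma isSignedCurveIntegral_iff :
    IsSignedCurveIntegral ν y a b L ↔ IsCurveIntegral ν y a b L ∧ IsCurveIntegral ν y b a (-L) := by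
  rw [IsSignedCurveIntegral]
  rcases le_or_gt a b with hab | hba
  · simp [hab, hab.not_gt, isCurveIntegral_of_le hab]
  · simp [hba, hba.not_ge, isCurveIntegral_of_le hba.le]

end CurveIntegrals

section ParametricBMeasures

variable {N : ℕ} {νbar : Fin N → EuclideanSpace ℝ (Fin N) → Set ℝ → ℝ} {mB lB : ℕ → Measure ℝ}
  {y : ℝ → EuclideanSpace ℝ (Fin N)}

lemma norm_le_mul_of_forall_abs_le {x : EuclideanSpace ℝ (Fin N)} {c : ℝ}
    (h : ∀ i, |x i| ≤ c) : ‖x‖ ≤ N * c := by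
  calc ‖x‖ = ‖∑ i, EuclideanSpace.single i (x i)‖ := by congr 1; ext k; simp [Pi.single_apply]
    _ ≤ ∑ i, ‖EuclideanSpace.single i (x i)‖ := norm_sum_le _ _
    _ ≤ ∑ _ : Fin N, c := Finset.sum_le_sum fun i _ => by simpa using h i
    _ = N * c := by simp

/-- The field `F(v, t)` of primitives of the b-measures `νⁱ_v`. It turns the integral equation of
`ν̄` into `dy = DF(y, t)`. -/
noncomputable def primitiveField (νbar : Fin N → EuclideanSpace ℝ (Fin N) → Set ℝ → ℝ)
    (v : EuclideanSpace ℝ (Fin N)) (t : ℝ) : EuclideanSpace ℝ (Fin N) :=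
  WithLp.toLp 2 fun i => primitive (νbar i v) t

lemma primitiveField_sub_apply {v : EuclideanSpace ℝ (Fin N)} {i : Fin N}
    (hν : IsBMeasure (νbar i v)) {s t : ℝ} (hst : s ≤ t) :
    (primitiveField νbar v t - primitiveField νbar v s) i = νbar i v (Ioc s t) :=
  hν.primitive_sub hst

lemma IsNDimParamBMeasure.isKurzweilClass (hν : IsNDimParamBMeasure νbar mB lB) {j : ℕ}
    (hj : 1 ≤ j) : IsKurzweilClass (primitiveField νbar) (Metric.closedBall 0 j) fun t =>
      N * (primitive (mB j).real t + primitive (lB j).real t) := by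
  obtain ⟨hm, hl, hbound, hlip⟩ := hν.2 j hj
  have hsplit : ∀ s t, s ≤ t → (N : ℝ) * (primitive (mB j).real t + primitive (lB j).real t) -
      N * (primitive (mB j).real s + primitive (lB j).real s) =
        N * ((mB j).real (Ioc s t) + (lB j).real (Ioc s t)) := fun s t hst => by
    rw [← hm.primitive_sub hst, ← hl.primitive_sub hst]
    ring
  refine ⟨fun s t hst => ?_, ?_, fun v hv s t hst => ?_, fun v hv w hw s t hst => ?_⟩
  · rw [← sub_nonneg, hsplit s t hst]
    positivity
  · exact continuous_const.mul (hm.continuous_primitive.add hl.continuous_primitive)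
  · rw [hsplit s t hst]
    refine norm_le_mul_of_forall_abs_le fun i => ?_
    rw [primitiveField_sub_apply (hν.1 i v) hst]
    exact ((hbound i v (mem_closedBall_zero_iff.1 hv)).abs_le measurableSet_Ioc
      (Metric.isBounded_Ioc _ _)).trans (le_add_of_nonneg_right measureReal_nonneg)
  · rw [hsplit s t hst, mul_left_comm]
    refine norm_le_mul_of_forall_abs_le fun i => ?_
    rw [PiLp.sub_apply, primitiveField_sub_apply (hν.1 i v) hst,
      primitiveField_sub_apply (hν.1 i w) hst]
    refine ((hlip i v w (mem_closedBall_zero_iff.1 hv) (mem_closedBall_zero_iff.1 hw)).abs_sub_le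
      measurableSet_Ioc (Metric.isBounded_Ioc _ _)).trans ?_
    gcongr
    exact le_add_of_nonneg_left measureReal_nonneg

lemma IsNDimParamBMeasure.isLocallyKurzweil (hν : IsNDimParamBMeasure νbar mB lB) :
    IsLocallyKurzweil (primitiveField νbar) := fun R => by
  obtain ⟨j, hj⟩ := exists_nat_ge R
  exact ⟨_, (hν.isKurzweilClass (le_max_right j 1)).mono
    (Metric.closedBall_subset_closedBall (hj.trans (by exact_mod_cast le_max_left j 1)))⟩

lemma hasKurzweilIntegral_primitiveField_iff {a b : ℝ} {L : EuclideanSpace ℝ (Fin N)}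
    (hν : ∀ i v, IsBMeasure (νbar i v)) :
    HasKurzweilIntegral (primitiveField νbar) y a b L ↔
      ∀ i, IsCurveIntegral (νbar i) y a b (L i) := by
  have hsum : ∀ (i : Fin N) (P : TaggedPartition a b),
      kurzweilSum (primitiveField νbar) y P i = RiemannSum (νbar i) y P := fun i P => by
    rw [kurzweilSum, RiemannSum, WithLp.ofLp_sum, Finset.sum_apply]
    refine Finset.sum_congr rfl fun k hk => ?_
    have hle := (P.lt k (Finset.mem_range.1 hk)).le
    exact (primitiveField_sub_apply (hν i _) hle).trans ((hν i _).Icc_eq_Ioc hle).symm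
  simp only [isCurveIntegral_iff_tendsto, HasKurzweilIntegral,
    (PiLp.homeomorph 2 fun _ : Fin N => ℝ).isInducing.tendsto_nhds_iff, tendsto_pi_nhds]
  exact forall_congr' fun i => tendsto_congr (hsum i)

lemma isSolutionOn_iff (hν : IsNDimParamBMeasure νbar mB lB) {t₀ : ℝ}
    {y₀ : EuclideanSpace ℝ (Fin N)} {S : Set ℝ} (hS : S.OrdConnected) :
    IsSolutionOn νbar t₀ y₀ S y ↔
      t₀ ∈ S ∧ y t₀ = y₀ ∧ IsGDESolutionOn (primitiveField νbar) y S := by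
  rw [IsSolutionOn]
  refine and_congr_right fun ht₀ => and_congr_right ?_
  rintro rfl
  simp [isGDESolutionOn_iff_of_mem hν.isLocallyKurzweil hS ht₀, isSignedCurveIntegral_iff,
    hasKurzweilIntegral_primitiveField_iff hν.1, forall_and]

end ParametricBMeasures

theorem stmt16 {N : ℕ} (νbar : Fin N → EuclideanSpace ℝ (Fin N) → Set ℝ → ℝ)
    (mB lB : ℕ → Measure ℝ) (hν : IsNDimParamBMeasure νbar mB lB)
    (t₀ : ℝ) (y₀ : EuclideanSpace ℝ (Fin N)) :
    ∃ (S : Set ℝ) (y : ℝ → EuclideanSpace ℝ (Fin N)),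
      IsMaximalSolution νbar t₀ y₀ S y ∧
      (BddAbove S → Tendsto (fun t => ‖y t‖) (𝓝[<] (sSup S)) atTop) ∧
      (BddBelow S → Tendsto (fun t => ‖y t‖) (𝓝[>] (sInf S)) atTop) := by
  set F := primitiveField νbar
  have hF : IsLocallyKurzweil F := hν.isLocallyKurzweil
  set S := existenceInterval F t₀ y₀
  have hS : S.OrdConnected := ordConnected_existenceInterval
  have ht₀ : t₀ ∈ S := mem_existenceInterval_self hF
  have hopen : IsOpen S := hF.isOpen_existenceInterval
  refine ⟨S, maximalSolution F t₀ y₀, ⟨?_, hopen, hS, fun S' hS' z hz => ?_⟩,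
    fun hbdd => ?_, fun hbdd => ?_⟩
  · exact (isSolutionOn_iff hν hS).2
      ⟨ht₀, hF.maximalSolution_self, hF.isGDESolutionOn_maximalSolution⟩
  · obtain ⟨ht₀', hzt₀, hz⟩ := (isSolutionOn_iff hν hS').1 hz
    exact hz.subset_existenceInterval hF hS' ht₀' hzt₀
  · have hlub : IsLUB S (sSup S) := isLUB_csSup ⟨t₀, ht₀⟩ hbdd
    have hmem := notMem_of_isOpen_of_isLUB hopen hlub
    exact (hF.tendsto_norm_maximalSolution hmem).mono_left
      (nhdsLT_le_nhdsWithin_of_isLUB hS ⟨t₀, ht₀⟩ hlub hmem)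
  · have hglb : IsGLB S (sInf S) := isGLB_csInf ⟨t₀, ht₀⟩ hbdd
    have hmem := notMem_of_isOpen_of_isGLB hopen hglb
    exact (hF.tendsto_norm_maximalSolution hmem).mono_left
      (nhdsGT_le_nhdsWithin_of_isGLB hS ⟨t₀, ht₀⟩ hglb hmem)
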